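/- arXiv:1812.00777 — 2 statements merged into one kernel-verified Lean document; each statement's English description precedes it below -/
import Mathlib

section
/- The multiple zeta value map ζ, extended linearly to the span of convergent words in ℕ*, is an algebra morphism for the stuffle product: ζ(w ⧢₁ w') = ζ(w)·ζ(w') for all convergent words w, w' (where ⧢₁ is the 1-shuffle with respect to the semigroup (ℕ*,+)). Likewise the multiple zeta star value map ζ⋆ is an algebra morphism for the anti-stuffle product: ζ⋆(w ⧢₋₁ w') = ζ⋆(w)·ζ⋆(w') for all convergent words w, w'. -/
/-! ### Words and shuffle products -/

/-- `𝓦_Ω`: the free `ℝ`-vector space on words written in the alphabet `Ω`. -/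
abbrev WAlg (Ω : Type) := List Ω →₀ ℝ

/-- The basis element of `𝓦_Ω` corresponding to a word. -/
noncomputable def wdelta {Ω : Type} (w : List Ω) : WAlg Ω := Finsupp.single w 1

/-- The `λ`-shuffle product of two words with respect to the (semigroup) product `mul`
on `Ω`, as an element of `𝓦_Ω`.  For `lam = 1` this is the stuffle product, for
`lam = -1` the anti-stuffle product and for `lam = 0` the usual shuffle product. -/
noncomputable def shw {Ω : Type} (mul : Ω → Ω → Ω) (lam : ℝ) : List Ω → List Ω → WAlg Ω
  | [], w => wdelta w
  | a :: u, [] => wdelta (a :: u)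
  | a :: u, b :: v =>
      Finsupp.mapDomain (a :: ·) (shw mul lam u (b :: v)) +
      Finsupp.mapDomain (b :: ·) (shw mul lam (a :: u) v) +
      lam • Finsupp.mapDomain (mul a b :: ·) (shw mul lam u v)
termination_by w₁ w₂ => w₁.length + w₂.length
decreasing_by all_goals (simp; try omega)

/-- A word over `ℕ* = {1,2,…}` is convergent when it is empty or its first letter
is at least `2`. -/
def ConvWordN (w : List ℕ+) : Prop := ∀ a, w.head? = some a → 2 ≤ (a : ℕ)

/-- The multiple zeta value `ζ(s₁,…,s_k) = Σ_{n₁ > ⋯ > n_k ≥ 1} ∏ nᵢ^{-sᵢ}` of a word. -/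
noncomputable def zetaW (w : List ℕ+) : ℝ :=
  ∑' n : {f : Fin w.length → ℕ+ // StrictAnti f},
    ∏ i, ((n.1 i : ℕ) : ℝ) ^ (-((w.get i : ℕ) : ℝ))

/-- The multiple zeta star value `ζ⋆(s₁,…,s_k) = Σ_{n₁ ≥ ⋯ ≥ n_k ≥ 1} ∏ nᵢ^{-sᵢ}`. -/
noncomputable def zetaWstar (w : List ℕ+) : ℝ :=
  ∑' n : {f : Fin w.length → ℕ+ // Antitone f},
    ∏ i, ((n.1 i : ℕ) : ℝ) ^ (-((w.get i : ℕ) : ℝ))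

/-- The linear extension of `ζ` to the span of words. -/
noncomputable def zetaWAlg (x : WAlg ℕ+) : ℝ := x.sum fun w c => c • zetaW w

/-- The linear extension of `ζ⋆` to the span of words. -/
noncomputable def zetaWstarAlg (x : WAlg ℕ+) : ℝ := x.sum fun w c => c • zetaWstar w

/-! Truncated at `m`, a nested sum is obtained by iterating the operator `f ↦ (m ↦ ∑ n < m, f n)`
(strict sums) or `f ↦ (m ↦ ∑ n ≤ m, f n)` (star sums). Splitting a product of two sums according to
`n > k`, `n < k` and `n = k` shows that these are Rota–Baxter operators of weight `1` and `-1`: the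
diagonal is missed by both strict halves and counted by both weak ones. The Rota–Baxter identity of
weight `λ` is the recursion defining the `λ`-shuffle, so the truncated sums turn it into the
pointwise product, and the theorem follows by letting `m` tend to infinity. The limit exists because
`n₁ ≥ ⋯ ≥ n_k` allows a spare power `n₁^{-δ}` to be shared as `∏ nᵢ^{-δ/k}`, which bounds the
summand by the product `∏ nᵢ^{-(1+δ/k)}` of independent convergent series. -/

open Filter Topology

section RotaBaxter

/-- A Rota–Baxter operator of weight `lam` on an algebra: an abstract summation operator, the
identity playing the role of integration by parts. -/
def IsRotaBaxter {R A : Type*} [CommSemiring R] [NonUnitalNonAssocSemiring A] [Module R A]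
    (lam : R) (P : A →ₗ[R] A) : Prop :=
  ∀ x y, P x * P y = P (x * P y) + P (P x * y) + lam • P (x * y)

variable {Ω : Type} {A : Type*} [CommRing A] [Algebra ℝ A]

/-- The evaluation of words by iterating the operator `P`, the letter `a` acting by
multiplication by `φ a`. For a summation operator these are the truncated nested sums. -/
def wordEval (P : A →ₗ[ℝ] A) (φ : Ω → A) : List Ω → A
  | [] => 1
  | a :: u => P (φ a * wordEval P φ u)

theorem linearCombination_wordEval_mapDomain_cons (P : A →ₗ[ℝ] A) (φ : Ω → A) (a : Ω)
    (x : WAlg Ω) :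
    Finsupp.linearCombination ℝ (wordEval P φ) (x.mapDomain (a :: ·)) =
      P (φ a * Finsupp.linearCombination ℝ (wordEval P φ) x) := by
  rw [Finsupp.linearCombination_mapDomain]
  exact (Finsupp.apply_linearCombination ℝ (P ∘ₗ LinearMap.mulLeft ℝ (φ a)) _ x).symm

theorem linearCombination_wordEval_shw {lam : ℝ} {P : A →ₗ[ℝ] A} (hP : IsRotaBaxter lam P)
    {mul : Ω → Ω → Ω} {φ : Ω → A} (hφ : ∀ a b, φ (mul a b) = φ a * φ b) (w w' : List Ω) :
    Finsupp.linearCombination ℝ (wordEval P φ) (shw mul lam w w') =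
      wordEval P φ w * wordEval P φ w' := by
  induction w, w' using shw.induct with
  | case1 w' => simp [shw, wdelta, wordEval]
  | case2 a u => simp [shw, wdelta, wordEval]
  | case3 a u b v ih₁ ih₂ ih₃ =>
    rw [shw, map_add, map_add, map_smul]
    simp only [linearCombination_wordEval_mapDomain_cons, ih₁, ih₂, ih₃]
    rw [wordEval, wordEval, hP, hφ]
    ring_nf

theorem shw_mem_supported (mul : Ω → Ω → Ω) (lam : ℝ) {T : Set Ω}
    (hT : ∀ a ∈ T, ∀ b ∈ T, mul a b ∈ T) {w w' : List Ω}
    (hw : ∀ a, w.head? = some a → a ∈ T) (hw' : ∀ a, w'.head? = some a → a ∈ T) :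
    shw mul lam w w' ∈ Finsupp.supported ℝ ℝ {x : List Ω | ∀ a, x.head? = some a → a ∈ T} := by
  have mapDomain_cons_mem {a : Ω} (ha : a ∈ T) (x : WAlg Ω) : x.mapDomain (a :: ·) ∈
      Finsupp.supported ℝ ℝ {x : List Ω | ∀ a, x.head? = some a → a ∈ T} := by
    classical
    intro y hy
    obtain ⟨z, -, rfl⟩ := Finset.mem_image.1 (Finsupp.mapDomain_support hy)
    simpa using ha
  match w, w' with
  | [], w' => rw [shw]; exact Finsupp.single_mem_supported ℝ 1 hw'
  | a :: u, [] => rw [shw]; exact Finsupp.single_mem_supported ℝ 1 hw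
  | a :: u, b :: v =>
    have ha := hw a rfl
    have hb := hw' b rfl
    rw [shw]
    exact add_mem (add_mem (mapDomain_cons_mem ha _) (mapDomain_cons_mem hb _))
      (Submodule.smul_mem _ lam (mapDomain_cons_mem (hT a ha b hb) _))

end RotaBaxter

section PrefixSum

variable {ι : Type*}

/-- The summation operator `f ↦ (m ↦ ∑ n ∈ S m, f n)`. Taking `S = Finset.Iio` gives the strict
partial sums and `S = Finset.Iic` the non-strict ones. -/
def prefixSum (R : Type*) [CommSemiring R] (S : ι → Finset ι) : (ι → R) →ₗ[R] (ι → R) :=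
  LinearMap.pi fun m => ∑ n ∈ S m, LinearMap.proj n

theorem prefixSum_apply {R : Type*} [CommSemiring R] (S : ι → Finset ι) (f : ι → R) (m : ι) :
    prefixSum R S f m = ∑ n ∈ S m, f n := by
  simp [prefixSum]

theorem isRotaBaxter_prefixSum {R : Type*} [CommSemiring R] [DecidableEq ι] {S : ι → Finset ι}
    (hS : ∀ m, ∀ n ∈ S m, S n ⊆ S m) {lam : R}
    (hlam : ∀ n k, (if k ∈ S n then 1 else 0) + (if n ∈ S k then 1 else 0) +
      (if n = k then lam else 0) = 1) :
    IsRotaBaxter lam (prefixSum R S) := by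
  intro f g
  ext m
  have extend (h : ι → R) {n : ι} (hn : n ∈ S m) :
      ∑ k ∈ S n, h k = ∑ k ∈ S m, if k ∈ S n then h k else 0 := by
    rw [Finset.sum_ite_mem, Finset.inter_eq_right.2 (hS m n hn)]
  have first_larger : ∑ n ∈ S m, f n * ∑ k ∈ S n, g k =
      ∑ n ∈ S m, ∑ k ∈ S m, f n * g k * if k ∈ S n then 1 else 0 := by
    refine Finset.sum_congr rfl fun n hn => ?_
    simp only [extend g hn, Finset.mul_sum, mul_ite, mul_one, mul_zero]
  have second_larger : ∑ k ∈ S m, (∑ n ∈ S k, f n) * g k =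
      ∑ n ∈ S m, ∑ k ∈ S m, f n * g k * if n ∈ S k then 1 else 0 := by
    rw [Finset.sum_comm]
    refine Finset.sum_congr rfl fun k hk => ?_
    simp only [extend f hk, Finset.sum_mul, ite_mul, zero_mul, mul_ite, mul_one, mul_zero]
  have diagonal : lam * ∑ n ∈ S m, f n * g n =
      ∑ n ∈ S m, ∑ k ∈ S m, f n * g k * if n = k then lam else 0 := by
    rw [Finset.mul_sum]
    refine Finset.sum_congr rfl fun n hn => ?_
    simp [hn, mul_comm lam]
  simp only [Pi.mul_apply, Pi.add_apply, Pi.smul_apply, prefixSum_apply, smul_eq_mul,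
    first_larger, second_larger, diagonal, ← Finset.sum_add_distrib, ← mul_add, hlam, mul_one,
    Finset.sum_mul_sum]

theorem isRotaBaxter_prefixSum_Iio (R : Type*) [CommSemiring R] [LinearOrder ι]
    [LocallyFiniteOrderBot ι] : IsRotaBaxter (1 : R) (prefixSum R (Finset.Iio (α := ι))) := by
  refine isRotaBaxter_prefixSum (fun m n hn => Finset.Iio_subset_Iio (Finset.mem_Iio.1 hn).le)
    fun n k => ?_
  rcases lt_trichotomy n k with h | rfl | h
  · simp [h, h.not_gt, h.ne]
  · simp
  · simp [h, h.not_gt, h.ne']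

theorem isRotaBaxter_prefixSum_Iic (R : Type*) [CommRing R] [LinearOrder ι]
    [LocallyFiniteOrderBot ι] : IsRotaBaxter (-1 : R) (prefixSum R (Finset.Iic (α := ι))) := by
  refine isRotaBaxter_prefixSum (fun m n hn => Finset.Iic_subset_Iic.2 (Finset.mem_Iic.1 hn))
    fun n k => ?_
  rcases lt_trichotomy n k with h | rfl | h
  · simp [h.le, h.not_ge, h.ne]
  · simp
  · simp [h.le, h.not_ge, h.ne']

end PrefixSum

section Descending

variable {ι : Type*}

/-- Each entry of the tuple lies in the range of summation attached by `S` to every earlier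
entry: strictly decreasing tuples for `S = Finset.Iio`, weakly decreasing ones for
`S = Finset.Iic`. -/
def IsDescending (S : ι → Finset ι) {k : ℕ} (f : Fin k → ι) : Prop :=
  ∀ ⦃i j⦄, i < j → f j ∈ S (f i)

theorem strictAnti_eq_isDescending_Iio [Preorder ι] [LocallyFiniteOrderBot ι] {k : ℕ} :
    (StrictAnti : (Fin k → ι) → Prop) = IsDescending Finset.Iio := by
  ext f
  simp only [StrictAnti, IsDescending, Finset.mem_Iio]

theorem antitone_eq_isDescending_Iic [PartialOrder ι] [LocallyFiniteOrderBot ι] {k : ℕ} :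
    (Antitone : (Fin k → ι) → Prop) = IsDescending Finset.Iic := by
  ext f
  simp only [antitone_iff_forall_lt, IsDescending, Finset.mem_Iic]

theorem isDescending_cons {S : ι → Finset ι} {k : ℕ} {n : ι} {f : Fin k → ι} :
    IsDescending S (Fin.cons n f : Fin (k + 1) → ι) ↔ (∀ j, f j ∈ S n) ∧ IsDescending S f := by
  simp [IsDescending, Fin.forall_fin_succ]

open Classical in
/-- The descending tuples of length `k` with entries in `S m`. -/
noncomputable def descendingTuples (S : ι → Finset ι) (k : ℕ) (m : ι) : Finset (Fin k → ι) :=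
  {f ∈ Fintype.piFinset fun _ => S m | IsDescending S f}

theorem mem_descendingTuples {S : ι → Finset ι} {k : ℕ} {m : ι} {f : Fin k → ι} :
    f ∈ descendingTuples S k m ↔ (∀ i, f i ∈ S m) ∧ IsDescending S f := by
  simp [descendingTuples]

theorem cons_mem_descendingTuples {S : ι → Finset ι} (hS : ∀ m, ∀ n ∈ S m, S n ⊆ S m) {k : ℕ}
    {m n : ι} {f : Fin k → ι} :
    (Fin.cons n f : Fin (k + 1) → ι) ∈ descendingTuples S (k + 1) m ↔
      n ∈ S m ∧ f ∈ descendingTuples S k n := by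
  simp only [mem_descendingTuples, isDescending_cons, Fin.forall_fin_succ, Fin.cons_zero,
    Fin.cons_succ]
  exact ⟨fun ⟨⟨hn, _⟩, hf⟩ => ⟨hn, hf⟩, fun ⟨hn, hf⟩ => ⟨⟨hn, fun i => hS m n hn (hf.1 i)⟩, hf⟩⟩

theorem sum_descendingTuples_succ {M : Type*} [AddCommMonoid M] {S : ι → Finset ι}
    (hS : ∀ m, ∀ n ∈ S m, S n ⊆ S m) {k : ℕ} (m : ι) (F : (Fin (k + 1) → ι) → M) :
    ∑ f ∈ descendingTuples S (k + 1) m, F f =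
      ∑ n ∈ S m, ∑ f ∈ descendingTuples S k n, F (Fin.cons n f) := by
  rw [Finset.sum_sigma']
  refine Finset.sum_nbij' (fun f => ⟨f 0, Fin.tail f⟩) (fun x => Fin.cons x.1 x.2)
    (fun f hf => ?_) (fun x hx => ?_) (by simp) (by simp) (by simp)
  · rw [← Fin.cons_self_tail f, cons_mem_descendingTuples hS] at hf
    exact Finset.mem_sigma.2 hf
  · exact (cons_mem_descendingTuples hS).2 (Finset.mem_sigma.1 hx)

theorem wordEval_prefixSum_apply {Ω : Type} {S : ι → Finset ι} (hS : ∀ m, ∀ n ∈ S m, S n ⊆ S m)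
    (φ : Ω → ι → ℝ) (w : List Ω) (m : ι) :
    wordEval (prefixSum ℝ S) φ w m =
      ∑ f ∈ descendingTuples S w.length m, ∏ i, φ (w.get i) (f i) := by
  induction w generalizing m with
  | nil => simp [wordEval, descendingTuples, IsDescending]
  | cons a u ih =>
    refine Eq.trans ?_ (sum_descendingTuples_succ hS m _).symm
    simp [wordEval, prefixSum_apply, ih, Finset.mul_sum, Fin.prod_univ_succ]

theorem tendsto_wordEval_prefixSum [Preorder ι] [IsDirectedOrder ι] [Nonempty ι] {Ω : Type}
    {S : ι → Finset ι} (hS : ∀ m, ∀ n ∈ S m, S n ⊆ S m) (hmono : Monotone S)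
    (hex : ∀ n, ∃ m, n ∈ S m) (φ : Ω → ι → ℝ) (w : List Ω)
    (hsum : Summable fun f : {f : Fin w.length → ι // IsDescending S f} =>
      ∏ i, φ (w.get i) (f.1 i)) :
    Tendsto (wordEval (prefixSum ℝ S) φ w) atTop
      (𝓝 (∑' f : {f : Fin w.length → ι // IsDescending S f}, ∏ i, φ (w.get i) (f.1 i))) := by
  classical
  have exhaust : Tendsto (fun m => (descendingTuples S w.length m).subtype (IsDescending S))
      atTop atTop := by
    refine tendsto_atTop_finset_of_monotone (fun m m' hm f hf => ?_) fun f => ?_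
    · rw [Finset.mem_subtype, mem_descendingTuples] at hf ⊢
      exact ⟨fun i => hmono hm (hf.1 i), hf.2⟩
    · choose b hb using hex
      obtain ⟨m, hm⟩ := Finite.exists_le fun i => b (f.1 i)
      refine ⟨m, ?_⟩
      rw [Finset.mem_subtype, mem_descendingTuples]
      exact ⟨fun i => hmono (hm i) (hb _), f.2⟩
  refine (hsum.hasSum.comp exhaust).congr fun m => ?_
  rw [Function.comp_apply, wordEval_prefixSum_apply hS]
  exact Finset.sum_subtype_of_mem (fun f => ∏ i, φ (w.get i) (f i))
    fun f hf => (mem_descendingTuples.1 hf).2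

end Descending

section Convergence

theorem summable_prod_pi {κ α : Type*} [Fintype κ] {g : α → ℝ} (hg₀ : ∀ a, 0 ≤ g a)
    (hg : Summable g) : Summable fun f : κ → α => ∏ i, g (f i) := by
  classical
  refine summable_of_sum_le (c := ∏ _i : κ, ∑' a, g a)
    (fun f => Finset.prod_nonneg fun i _ => hg₀ (f i)) fun t => ?_
  have ht : t ⊆ Fintype.piFinset fun i => t.image (· i) := fun f hf =>
    Fintype.mem_piFinset.2 fun i => Finset.mem_image_of_mem _ hf
  calc ∑ f ∈ t, ∏ i, g (f i)
      ≤ ∑ f ∈ Fintype.piFinset fun i => t.image (· i), ∏ i, g (f i) :=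
        Finset.sum_le_sum_of_subset_of_nonneg ht fun f _ _ =>
          Finset.prod_nonneg fun i _ => hg₀ (f i)
    _ = ∏ i, ∑ a ∈ t.image (· i), g a := (Finset.prod_univ_sum _ _).symm
    _ ≤ ∏ _i : κ, ∑' a, g a := Finset.prod_le_prod
        (fun i _ => Finset.sum_nonneg fun a _ => hg₀ a)
        fun i _ => hg.sum_le_tsum _ fun a _ => hg₀ a

theorem rpow_neg_le_prod_of_antitone {k : ℕ} {f : Fin (k + 1) → ℕ+} (hf : Antitone f) {δ : ℝ}
    (hδ : 0 ≤ δ) : (f 0 : ℝ) ^ (-δ) ≤ ∏ i, (f i : ℝ) ^ (-(δ / (k + 1))) := by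
  have f_pos (i) : (0 : ℝ) < f i := by exact_mod_cast (f i).pos
  calc (f 0 : ℝ) ^ (-δ) = ∏ _i : Fin (k + 1), (f 0 : ℝ) ^ (-(δ / (k + 1))) := by
        rw [Finset.prod_const, Finset.card_fin, ← Real.rpow_mul_natCast (f_pos 0).le]
        congr 1
        push_cast
        field_simp
    _ ≤ ∏ i, (f i : ℝ) ^ (-(δ / (k + 1))) := by
        refine Finset.prod_le_prod (fun i _ => by positivity) fun i _ => ?_
        refine Real.rpow_le_rpow_of_nonpos (f_pos i) ?_ (neg_nonpos.2 (by positivity))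
        exact_mod_cast hf (Fin.zero_le i)

theorem prod_rpow_neg_le_of_antitone {k : ℕ} {f : Fin (k + 1) → ℕ+} (hf : Antitone f)
    {s : Fin (k + 1) → ℝ} (hs : ∀ i, 1 ≤ s i) :
    ∏ i, (f i : ℝ) ^ (-s i) ≤ ∏ i, (f i : ℝ) ^ (-(1 + (s 0 - 1) / (k + 1))) := by
  have f_pos (i) : (0 : ℝ) < f i := by exact_mod_cast (f i).pos
  have one_le_f (i) : (1 : ℝ) ≤ f i := by exact_mod_cast one_le (a := f i)
  calc ∏ i, (f i : ℝ) ^ (-s i)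
      = (f 0 : ℝ) ^ (-(s 0 - 1)) * ((f 0 : ℝ) ^ (-1 : ℝ) *
          ∏ i : Fin k, (f i.succ : ℝ) ^ (-s i.succ)) := by
        rw [Fin.prod_univ_succ, ← mul_assoc, ← Real.rpow_add (f_pos 0)]
        ring_nf
    _ ≤ (f 0 : ℝ) ^ (-(s 0 - 1)) * ((f 0 : ℝ) ^ (-1 : ℝ) *
          ∏ i : Fin k, (f i.succ : ℝ) ^ (-1 : ℝ)) := by
        gcongr with i
        · exact one_le_f _
        · exact hs _
    _ = (f 0 : ℝ) ^ (-(s 0 - 1)) * ∏ i, (f i : ℝ) ^ (-1 : ℝ) := by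
        rw [Fin.prod_univ_succ (fun i => (f i : ℝ) ^ (-1 : ℝ))]
    _ ≤ (∏ i, (f i : ℝ) ^ (-((s 0 - 1) / (k + 1)))) * ∏ i, (f i : ℝ) ^ (-1 : ℝ) := by
        gcongr
        exact rpow_neg_le_prod_of_antitone hf (sub_nonneg.2 (hs 0))
    _ = ∏ i, (f i : ℝ) ^ (-(1 + (s 0 - 1) / (k + 1))) := by
        rw [← Finset.prod_mul_distrib]
        refine Finset.prod_congr rfl fun i _ => ?_
        rw [← Real.rpow_add (f_pos i)]
        ring_nf

theorem summable_prod_rpow_neg_of_antitone {k : ℕ} {s : Fin k → ℝ} (hs : ∀ i, 1 ≤ s i)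
    (hs₀ : ∀ i : Fin k, (i : ℕ) = 0 → 1 < s i) {p : (Fin k → ℕ+) → Prop}
    (hp : ∀ f, p f → Antitone f) :
    Summable fun f : {f // p f} => ∏ i, (f.1 i : ℝ) ^ (-s i) := by
  cases k with
  | zero => exact Summable.of_finite
  | succ k =>
    have one_lt : 1 < 1 + (s 0 - 1) / (k + 1) := by
      have := sub_pos.2 (hs₀ 0 rfl)
      exact lt_add_of_pos_right 1 (by positivity)
    have summable_power :
        Summable fun n : ℕ+ => (n : ℝ) ^ (-(1 + (s 0 - 1) / (k + 1))) :=
      (Real.summable_nat_rpow.2 (neg_lt_neg one_lt)).comp_injective PNat.coe_injective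
    refine Summable.of_nonneg_of_le (fun f => by positivity)
      (fun f => prod_rpow_neg_le_of_antitone (hp f.1 f.2) hs) ?_
    exact (summable_prod_pi (fun n => by positivity) summable_power).comp_injective
      Subtype.val_injective

end Convergence

section Zeta

/-- The function `n ↦ n⁻ᵃ` on the positive integers attached to the letter `a`. -/
noncomputable def zetaWeight (a n : ℕ+) : ℝ := ((n : ℕ) : ℝ) ^ (-((a : ℕ) : ℝ))

theorem zetaWeight_add (a b : ℕ+) : zetaWeight (a + b) = zetaWeight a * zetaWeight b := by
  ext n
  have n_pos : (0 : ℝ) < (n : ℕ) := by exact_mod_cast n.pos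
  simp only [zetaWeight, Pi.mul_apply, ← Real.rpow_add n_pos, PNat.add_coe, Nat.cast_add, neg_add]

theorem summable_zetaWeight_of_antitone {w : List ℕ+} (hw : ConvWordN w)
    {p : (Fin w.length → ℕ+) → Prop} (hp : ∀ f, p f → Antitone f) :
    Summable fun f : {f // p f} => ∏ i, zetaWeight (w.get i) (f.1 i) := by
  refine summable_prod_rpow_neg_of_antitone (s := fun i => ((w.get i : ℕ) : ℝ))
    (fun i => by exact_mod_cast one_le (a := w.get i)) (fun i hi => ?_) hp
  have two_le : 2 ≤ (w.get i : ℕ) := hw _ (by simp [List.head?_eq_getElem?, ← hi])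
  exact_mod_cast two_le

theorem tendsto_wordEval_zetaW {w : List ℕ+} (hw : ConvWordN w) :
    Tendsto (wordEval (prefixSum ℝ Finset.Iio) zetaWeight w) atTop (𝓝 (zetaW w)) := by
  have hsum := summable_zetaWeight_of_antitone hw fun _ hf => StrictAnti.antitone hf
  unfold zetaW
  rw [strictAnti_eq_isDescending_Iio] at hsum ⊢
  exact tendsto_wordEval_prefixSum
    (fun m n hn => Finset.Iio_subset_Iio (Finset.mem_Iio.1 hn).le)
    (fun _ _ h => Finset.Iio_subset_Iio h)
    (fun n => ⟨n + 1, Finset.mem_Iio.2 (PNat.lt_add_right n 1)⟩) zetaWeight w hsum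

theorem tendsto_wordEval_zetaWstar {w : List ℕ+} (hw : ConvWordN w) :
    Tendsto (wordEval (prefixSum ℝ Finset.Iic) zetaWeight w) atTop (𝓝 (zetaWstar w)) := by
  have hsum := summable_zetaWeight_of_antitone hw fun _ hf => hf
  unfold zetaWstar
  rw [antitone_eq_isDescending_Iic] at hsum ⊢
  exact tendsto_wordEval_prefixSum
    (fun m n hn => Finset.Iic_subset_Iic.2 (Finset.mem_Iic.1 hn))
    (fun _ _ h => Finset.Iic_subset_Iic.2 h) (fun n => ⟨n, Finset.mem_Iic.2 le_rfl⟩)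
    zetaWeight w hsum

theorem convWordN_of_mem_support_shw (lam : ℝ) {w w' : List ℕ+} (hw : ConvWordN w)
    (hw' : ConvWordN w') {x : List ℕ+}
    (hx : x ∈ (shw (fun a b : ℕ+ => a + b) lam w w').support) : ConvWordN x := by
  have two_le_add (a : ℕ+) (ha : 2 ≤ (a : ℕ)) (b : ℕ+) (_ : 2 ≤ (b : ℕ)) :
      2 ≤ ((a + b : ℕ+) : ℕ) := by
    rw [PNat.add_coe]
    exact le_add_right ha
  exact shw_mem_supported _ lam (T := {a : ℕ+ | 2 ≤ (a : ℕ)}) two_le_add hw hw' hx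

theorem sum_shw_eq_mul_of_tendsto {lam : ℝ} {P : (ℕ+ → ℝ) →ₗ[ℝ] (ℕ+ → ℝ)}
    (hP : IsRotaBaxter lam P) {z : List ℕ+ → ℝ}
    (hz : ∀ {w}, ConvWordN w → Tendsto (wordEval P zetaWeight w) atTop (𝓝 (z w)))
    {w w' : List ℕ+} (hw : ConvWordN w) (hw' : ConvWordN w') :
    ((shw (fun a b : ℕ+ => a + b) lam w w').sum fun x c => c • z x) = z w * z w' := by
  set X := shw (fun a b : ℕ+ => a + b) lam w w' with hX
  have tendsto_sum : Tendsto (Finsupp.linearCombination ℝ (wordEval P zetaWeight) X) atTop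
      (𝓝 (X.sum fun x c => c • z x)) := by
    rw [Finsupp.linearCombination_apply, Finsupp.sum, tendsto_congr (Finset.sum_apply · _ _)]
    exact tendsto_finsetSum _ fun x hx =>
      (hz (convWordN_of_mem_support_shw lam hw hw' hx)).const_smul (X x)
  rw [hX, linearCombination_wordEval_shw hP zetaWeight_add, ← hX] at tendsto_sum
  exact tendsto_nhds_unique tendsto_sum ((hz hw).mul (hz hw'))

end Zeta

/-- **Statement 10** (Proposition `prop:zeta_stuffle_mor`).
The multiple zeta value map `ζ` is an algebra morphism for the stuffle product `⧢₁`
(taken with respect to the semigroup `(ℕ*, +)`) on convergent words, and the multiple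
zeta star value map `ζ⋆` is an algebra morphism for the anti-stuffle product `⧢₋₁`. -/
theorem statement10 :
    (∀ w w' : List ℕ+, ConvWordN w → ConvWordN w' →
      zetaWAlg (shw (fun a b : ℕ+ => a + b) 1 w w') = zetaW w * zetaW w') ∧
    (∀ w w' : List ℕ+, ConvWordN w → ConvWordN w' →
      zetaWstarAlg (shw (fun a b : ℕ+ => a + b) (-1) w w') = zetaWstar w * zetaWstar w') :=
  ⟨fun _ _ => sum_shw_eq_mul_of_tendsto (isRotaBaxter_prefixSum_Iio ℝ) tendsto_wordEval_zetaW,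
    fun _ _ =>
      sum_shw_eq_mul_of_tendsto (isRotaBaxter_prefixSum_Iic ℝ) tendsto_wordEval_zetaWstar⟩
end

section
/- The integration operator ∫, defined by (∫σ)(x) = ∫₁^x σ(t)dt, maps 𝓟^{α;l} into 𝓟^{α+1;l} + 𝓟^{0;0} for every α ∈ ℝ∖ℤ_{≥−1} and l ∈ ℕ; furthermore it maps 𝓟^{−1;l} into 𝓟^{0;l+1} + 𝓟^{0;0} for every l ∈ ℕ. -/
open Set

/-! ### Symbols and log-polyhomogeneous symbols -/

/-- A symbol of order `r` on `[c,∞)`: a smooth function whose `k`-th derivative is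
`O(x^{r-k})` on `[c,∞)`, for every `k`. -/
def IsSymbolOn (c r : ℝ) (f : ℝ → ℝ) : Prop :=
  ContDiffOn ℝ (⊤ : ℕ∞) f (Ici c) ∧
  ∀ k : ℕ, ∃ C : ℝ, ∀ x ≥ c, |iteratedDerivWithin k f (Ici c) x| ≤ C * x ^ (r - k)

/-- A classical (poly-homogeneous) symbol of order `α` on `[c,∞)`. -/
def IsCSOn (c α : ℝ) (f : ℝ → ℝ) : Prop :=
  IsSymbolOn c α f ∧
  ∃ a : ℕ → ℝ, ∀ N : ℕ,
    IsSymbolOn c (α - N) fun x => f x - ∑ j ∈ Finset.range N, a j * x ^ (α - j)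

/-- Membership in `𝓟^{α;k}(ℝ_{≥c})`, the space of log-polyhomogeneous symbols of order
`(α,k)`: sums `Σ_{l ≤ k} f_l(x)·log^l(x)` with each `f_l` a classical symbol of order `α`. -/
def MemP (c α : ℝ) (k : ℕ) (f : ℝ → ℝ) : Prop :=
  ∃ g : ℕ → ℝ → ℝ, (∀ l, l ≤ k → IsCSOn c α (g l)) ∧
    ∀ x ≥ c, f x = ∑ l ∈ Finset.range (k + 1), g l x * (Real.log x) ^ l

/-- Membership in the sum of spaces `𝓟^{α;k}(ℝ_{≥c}) + 𝓟^{β;m}(ℝ_{≥c})`. -/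
def MemPsum (c α : ℝ) (k : ℕ) (β : ℝ) (m : ℕ) (f : ℝ → ℝ) : Prop :=
  ∃ g h : ℝ → ℝ, MemP c α k g ∧ MemP c β m h ∧ ∀ x ≥ c, f x = g x + h x

/-- The periodised Bernoulli polynomial `B̄₂(t) = B₂(t - ⌊t⌋)`, as a real function. -/
noncomputable def periodicBernoulli2 (t : ℝ) : ℝ :=
  ((Polynomial.bernoulli 2).map (algebraMap ℚ ℝ)).eval (Int.fract t)

/-- The Euler--MacLaurin operator `P` (with the choice `K = 2`, of which the expression
is independent):
`P(σ)(x) = ∫₁^x σ + ½(σ(x)+σ(1)) + (B₂/2!)(σ'(x)-σ'(1)) - (1/2!)∫₁^x B̄₂(t) σ''(t) dt`. -/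
noncomputable def EMop (σ : ℝ → ℝ) (x : ℝ) : ℝ :=
  (∫ t in (1:ℝ)..x, σ t) + (σ x + σ 1) / 2 +
    (((bernoulli 2 : ℚ) : ℝ) / 2) *
      (derivWithin σ (Ici 1) x - derivWithin σ (Ici 1) 1) -
    (1 / 2) * ∫ t in (1:ℝ)..x, periodicBernoulli2 t * iteratedDerivWithin 2 σ (Ici 1) t

/-- The integration operator `(∫σ)(x) = ∫₁^x σ(t) dt`. -/
noncomputable def intOp (σ : ℝ → ℝ) (x : ℝ) : ℝ := ∫ t in (1:ℝ)..x, σ t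

/-!
Everything happens at the level of primitives. A symbol of order `r < -1` has the primitive
`-∫_x^∞ f`, which is a symbol of order `r + 1`. If `g` is classical with expansion
`g ∼ ∑ a_j x^(α-j)`, integrate the first `M` terms by hand, where `M > α + 1`, and the remainder
from infinity; this gives a primitive of `g` with expansion `∑ a_j / (α+1-j) x^(α+1-j)`. The only
obstruction is a term `a x⁻¹`, present only if `α + 1 ∈ ℕ`, whose primitive is `a log x`.
Integration by parts,
`∫ g log^(m+1) = G log^(m+1) - (m+1) ∫ (G x⁻¹) log^m` with `G' = g`,
then yields `g log^m` by induction on `m`, and each `a x⁻¹ log^m` costs one power of the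
logarithm, with primitive `a/(m+1) log^(m+1)`.
-/

section Symbols

open MeasureTheory

variable {c r s : ℝ} {f g : ℝ → ℝ}

namespace IsSymbolOn

theorem congr (hf : IsSymbolOn c r f) (h : EqOn g f (Ici c)) : IsSymbolOn c r g := by
  refine ⟨hf.1.congr h, fun k => ?_⟩
  obtain ⟨C, hC⟩ := hf.2 k
  exact ⟨C, fun x hx => (iteratedDerivWithin_congr h hx).symm ▸ hC x hx⟩

theorem continuousOn (hf : IsSymbolOn c r f) : ContinuousOn f (Ici c) :=
  hf.1.continuousOn

theorem contDiffWithinAt (hf : IsSymbolOn c r f) (k : ℕ) {x : ℝ} (hx : x ∈ Ici c) :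
    ContDiffWithinAt ℝ k f (Ici c) x :=
  (hf.1 x hx).of_le (by exact_mod_cast le_top)

theorem exists_nonneg_bound (hc : 0 < c) (hf : IsSymbolOn c r f) (k : ℕ) :
    ∃ C, 0 ≤ C ∧ ∀ x ≥ c, |iteratedDerivWithin k f (Ici c) x| ≤ C * x ^ (r - k) := by
  obtain ⟨C, hC⟩ := hf.2 k
  refine ⟨|C|, abs_nonneg C, fun x hx => (hC x hx).trans ?_⟩
  have hx0 : 0 ≤ x := hc.le.trans hx
  gcongr
  exact le_abs_self C

theorem mono (hc : 0 < c) (hf : IsSymbolOn c r f) (hrs : r ≤ s) : IsSymbolOn c s f := by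
  refine ⟨hf.1, fun k => ?_⟩
  obtain ⟨C, hC0, hC⟩ := hf.exists_nonneg_bound hc k
  refine ⟨C * c ^ (r - s), fun x hx => (hC x hx).trans ?_⟩
  have hx0 : 0 < x := hc.trans_le hx
  have hcx : x ^ (r - s) ≤ c ^ (r - s) :=
    Real.rpow_le_rpow_of_nonpos hc hx (sub_nonpos.2 hrs)
  calc C * x ^ (r - k) = C * x ^ (r - s) * x ^ (s - k) := by
        rw [mul_assoc, ← Real.rpow_add hx0]; ring_nf
    _ ≤ C * c ^ (r - s) * x ^ (s - k) := by gcongr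

protected theorem zero (c r : ℝ) : IsSymbolOn c r fun _ => 0 :=
  ⟨contDiffOn_const, fun k => ⟨0, fun x _ => by simp⟩⟩

protected theorem rpow (hc : 0 < c) (r : ℝ) : IsSymbolOn c r fun x => x ^ r := by
  have hsmooth : ∀ {n : WithTop ℕ∞}, ∀ x ≥ c, ContDiffAt ℝ n (fun x : ℝ => x ^ r) x :=
    fun x hx => Real.contDiffAt_rpow_const_of_ne (hc.trans_le hx).ne'
  refine ⟨fun x hx => (hsmooth x hx).contDiffWithinAt, fun k =>
    ⟨|(descPochhammer ℝ k).eval r|, fun x hx => ?_⟩⟩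
  rw [iteratedDerivWithin_eq_iteratedDeriv (uniqueDiffOn_Ici c) (hsmooth x hx) hx,
    iteratedDeriv_eq_iterate, Real.iter_deriv_rpow_const, abs_mul,
    abs_of_nonneg (Real.rpow_nonneg (hc.le.trans hx) _)]

theorem add (hf : IsSymbolOn c r f) (hg : IsSymbolOn c r g) :
    IsSymbolOn c r fun x => f x + g x := by
  refine ⟨hf.1.add hg.1, fun k => ?_⟩
  obtain ⟨C, hC⟩ := hf.2 k
  obtain ⟨D, hD⟩ := hg.2 k
  refine ⟨C + D, fun x hx => ?_⟩
  rw [iteratedDerivWithin_fun_add (mem_Ici.2 hx) (uniqueDiffOn_Ici c) (hf.contDiffWithinAt k hx)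
    (hg.contDiffWithinAt k hx), add_mul]
  exact (abs_add_le _ _).trans (add_le_add (hC x hx) (hD x hx))

theorem const_mul (hf : IsSymbolOn c r f) (d : ℝ) : IsSymbolOn c r fun x => d * f x := by
  refine ⟨contDiffOn_const.mul hf.1, fun k => ?_⟩
  obtain ⟨C, hC⟩ := hf.2 k
  refine ⟨|d| * C, fun x hx => ?_⟩
  rw [iteratedDerivWithin_const_mul (mem_Ici.2 hx) (uniqueDiffOn_Ici c) d
    (hf.contDiffWithinAt k hx), abs_mul, mul_assoc]
  exact mul_le_mul_of_nonneg_left (hC x hx) (abs_nonneg d)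

theorem mul (hc : 0 < c) (hf : IsSymbolOn c r f) (hg : IsSymbolOn c s g) :
    IsSymbolOn c (r + s) fun x => f x * g x := by
  refine ⟨hf.1.mul hg.1, fun k => ?_⟩
  choose C hC0 hC using hf.exists_nonneg_bound hc
  choose D _ hD using hg.exists_nonneg_bound hc
  refine ⟨∑ i ∈ Finset.range (k + 1), k.choose i * C i * D (k - i), fun x hx => ?_⟩
  have hx0 : 0 < x := hc.trans_le hx
  have leibniz := iteratedDerivWithin_mul (mem_Ici.2 hx) (uniqueDiffOn_Ici c)
    (hf.contDiffWithinAt k hx) (hg.contDiffWithinAt k hx)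
  rw [← Pi.mul_def, leibniz, Finset.sum_mul]
  refine (Finset.abs_sum_le_sum_abs _ _).trans (Finset.sum_le_sum fun i hi => ?_)
  have hik : i ≤ k := Nat.lt_succ_iff.1 (Finset.mem_range.1 hi)
  have hexp : x ^ (r + s - k) = x ^ (r - i) * x ^ (s - (k - i : ℕ)) := by
    rw [← Real.rpow_add hx0, Nat.cast_sub hik]
    ring_nf
  rw [abs_mul, abs_mul, Nat.abs_cast]
  calc _ ≤ k.choose i * (C i * x ^ (r - i)) * (D (k - i) * x ^ (s - (k - i : ℕ))) := by
        have := hC0 i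
        gcongr
        exacts [hC i x hx, hD (k - i) x hx]
    _ = _ := by rw [hexp]; ring

theorem norm_le_rpow (hf : IsSymbolOn c r f) : ∃ C, ∀ x ≥ c, ‖f x‖ ≤ C * x ^ r := by
  simpa using hf.2 0

theorem of_hasDerivWithinAt (hg : IsSymbolOn c r g)
    (hf : ∀ x ≥ c, HasDerivWithinAt f (g x) (Ici c) x)
    (hbound : ∃ C, ∀ x ≥ c, ‖f x‖ ≤ C * x ^ (r + 1)) : IsSymbolOn c (r + 1) f := by
  have hderiv : EqOn (derivWithin f (Ici c)) g (Ici c) := fun x hx =>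
    (hf x hx).derivWithin (uniqueDiffOn_Ici c x hx)
  refine ⟨(contDiffOn_infty_iff_derivWithin (uniqueDiffOn_Ici c)).2
    ⟨fun x hx => (hf x hx).differentiableWithinAt, hg.1.congr hderiv⟩, fun k => ?_⟩
  cases k with
  | zero => simpa using hbound
  | succ k =>
    obtain ⟨C, hC⟩ := hg.2 k
    refine ⟨C, fun x hx => ?_⟩
    rw [iteratedDerivWithin_succ', iteratedDerivWithin_congr hderiv hx,
      show r + 1 - (k + 1 : ℕ) = r - k by push_cast; ring]
    exact hC x hx

theorem integrableOn_Ioi (hc : 0 < c) (hf : IsSymbolOn c r f) (hr : r < -1) {x : ℝ} (hx : c ≤ x) :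
    IntegrableOn f (Ioi x) := by
  obtain ⟨C, hC⟩ := hf.norm_le_rpow
  have hsub : Ioi x ⊆ Ici c := fun t ht => hx.trans (le_of_lt ht)
  refine ((integrableOn_Ioi_rpow_of_lt hr (hc.trans_le hx)).const_mul C).mono'
    ((hf.continuousOn.mono hsub).aestronglyMeasurable measurableSet_Ioi) ?_
  exact ae_restrict_of_forall_mem measurableSet_Ioi fun t ht => hC t (hsub ht)

end IsSymbolOn

theorem hasDerivWithinAt_integral_Ici (hf : ContinuousOn f (Ici c)) {x : ℝ} (hx : c ≤ x) :
    HasDerivWithinAt (fun y => ∫ t in c..y, f t) (f x) (Ici c) x := by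
  have hext : Continuous fun t => f (max c t) :=
    hf.comp_continuous (by fun_prop) fun t => le_max_left c t
  have hderiv := (hext.integral_hasStrictDerivAt c x).hasDerivAt.hasDerivWithinAt (s := Ici c)
  rw [max_eq_right hx] at hderiv
  have heq : EqOn (fun y => ∫ t in c..y, f t) (fun y => ∫ t in c..y, f (max c t)) (Ici c) := by
    refine fun y hy => intervalIntegral.integral_congr fun t ht => ?_
    rw [uIcc_of_le hy] at ht
    simp only [max_eq_right ht.1]
  exact hderiv.congr heq (heq hx)

theorem hasDerivWithinAt_neg_integral_Ioi (hf : ContinuousOn f (Ici c))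
    (hint : IntegrableOn f (Ioi c)) {x : ℝ} (hx : c ≤ x) :
    HasDerivWithinAt (fun y => -∫ t in Ioi y, f t) (f x) (Ici c) x := by
  have heq : EqOn (fun y => -∫ t in Ioi y, f t)
      (fun y => (∫ t in c..y, f t) - ∫ t in Ioi c, f t) (Ici c) := fun y hy => by
    linarith [intervalIntegral.integral_Ioi_sub_Ioi hint hy]
  exact ((hasDerivWithinAt_integral_Ici hf hx).sub_const _).congr heq (heq hx)

theorem IsSymbolOn.neg_integral_Ioi (hc : 0 < c) (hf : IsSymbolOn c r f) (hr : r < -1) :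
    IsSymbolOn c (r + 1) fun x => -∫ t in Ioi x, f t := by
  refine hf.of_hasDerivWithinAt (fun x hx => hasDerivWithinAt_neg_integral_Ioi hf.continuousOn
    (hf.integrableOn_Ioi hc hr le_rfl) hx) ?_
  obtain ⟨C, hC⟩ := hf.norm_le_rpow
  refine ⟨C * (-1 / (r + 1)), fun x hx => ?_⟩
  have hx0 : 0 < x := hc.trans_le hx
  calc ‖-∫ t in Ioi x, f t‖ ≤ ∫ t in Ioi x, C * t ^ r := by
        rw [norm_neg]
        exact norm_integral_le_of_norm_le ((integrableOn_Ioi_rpow_of_lt hr hx0).const_mul C)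
          (ae_restrict_of_forall_mem measurableSet_Ioi fun t ht => hC t (hx.trans (le_of_lt ht)))
    _ = C * (-1 / (r + 1)) * x ^ (r + 1) := by
        rw [integral_const_mul, integral_Ioi_rpow_of_lt hr hx0]
        ring

end Symbols

/-- The remainder `f(x) - ∑_{j<N} a_j x^(α-j)` of a formal expansion of order `α`. -/
noncomputable def expansionRemainder (α : ℝ) (a : ℕ → ℝ) (f : ℝ → ℝ) (N : ℕ) (x : ℝ) : ℝ :=
  f x - ∑ j ∈ Finset.range N, a j * x ^ (α - j)

/-- The asymptotic expansion `f ∼ ∑ a_j x^(α-j)` on `[c,∞)` in the sense of symbols, which makes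
the coefficients in `IsCSOn` available by name. -/
def HasExpansion (c α : ℝ) (f : ℝ → ℝ) (a : ℕ → ℝ) : Prop :=
  ∀ N : ℕ, IsSymbolOn c (α - N) (expansionRemainder α a f N)

section Classical

open MeasureTheory

variable {c α : ℝ} {f g : ℝ → ℝ} {a b : ℕ → ℝ}

theorem expansionRemainder_zero (α : ℝ) (a : ℕ → ℝ) (f : ℝ → ℝ) :
    expansionRemainder α a f 0 = f := by
  ext x
  simp [expansionRemainder]

theorem expansionRemainder_succ (α : ℝ) (a : ℕ → ℝ) (f : ℝ → ℝ) (N : ℕ) (x : ℝ) :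
    expansionRemainder α a f (N + 1) x = expansionRemainder α a f N x - a N * x ^ (α - N) := by
  rw [expansionRemainder, expansionRemainder, Finset.sum_range_succ, sub_add_eq_sub_sub]

theorem isCSOn_iff_exists_hasExpansion : IsCSOn c α f ↔ ∃ a, HasExpansion c α f a :=
  ⟨And.right, fun ⟨a, ha⟩ => ⟨by simpa [expansionRemainder_zero] using ha 0, a, ha⟩⟩

namespace HasExpansion

theorem of_le (hc : 0 < c) (M : ℕ)
    (h : ∀ N ≥ M, IsSymbolOn c (α - N) (expansionRemainder α a f N)) : HasExpansion c α f a := by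
  have hpred (N : ℕ) (hN : IsSymbolOn c (α - (N + 1 : ℕ)) (expansionRemainder α a f (N + 1))) :
      IsSymbolOn c (α - N) (expansionRemainder α a f N) := by
    have horder : α - (N + 1 : ℕ) ≤ α - N := by push_cast; linarith
    refine ((hN.mono hc horder).add ((IsSymbolOn.rpow hc (α - N)).const_mul (a N))).congr
      fun x _ => ?_
    simp only [expansionRemainder_succ, sub_add_cancel]
  intro N
  rcases le_total M N with hMN | hNM
  · exact h N hMN
  · induction hNM using Nat.decreasingInduction with
    | self => exact h M le_rfl
    | of_succ N _ ih => exact hpred N ih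

theorem add (hf : HasExpansion c α f a) (hg : HasExpansion c α g b) :
    HasExpansion c α (fun x => f x + g x) fun j => a j + b j := by
  refine fun N => ((hf N).add (hg N)).congr fun x _ => ?_
  simp only [expansionRemainder, add_mul, Finset.sum_add_distrib]
  ring

theorem const_mul (hf : HasExpansion c α f a) (d : ℝ) :
    HasExpansion c α (fun x => d * f x) fun j => d * a j := by
  refine fun N => ((hf N).const_mul d).congr fun x _ => ?_
  simp only [expansionRemainder, mul_assoc, mul_sub, Finset.mul_sum]

theorem mul_rpow (hc : 0 < c) (hf : HasExpansion c α f a) (s : ℝ) :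
    HasExpansion c (α + s) (fun x => f x * x ^ s) a := by
  intro N
  rw [add_sub_right_comm]
  refine ((hf N).mul hc (IsSymbolOn.rpow hc s)).congr fun x hx => ?_
  have hx0 : 0 < x := hc.trans_le hx
  simp only [expansionRemainder, sub_mul, Finset.sum_mul, mul_assoc, ← Real.rpow_add hx0,
    add_sub_right_comm α s]

protected theorem rpow_sub_natCast (hc : 0 < c) (α : ℝ) (n : ℕ) :
    HasExpansion c α (fun x => x ^ (α - n)) (Pi.single n 1) := by
  refine of_le hc (n + 1) fun N hN => (IsSymbolOn.zero c _).congr fun x _ => ?_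
  have hn : n ∈ Finset.range N := Finset.mem_range.2 hN
  simp [expansionRemainder, Pi.single_apply, Finset.mem_range.1 hn]

end HasExpansion

namespace IsCSOn

theorem continuousOn (hf : IsCSOn c α f) : ContinuousOn f (Ici c) :=
  hf.1.continuousOn

theorem add (hf : IsCSOn c α f) (hg : IsCSOn c α g) : IsCSOn c α fun x => f x + g x := by
  obtain ⟨a, ha⟩ := hf.2
  obtain ⟨b, hb⟩ := hg.2
  exact isCSOn_iff_exists_hasExpansion.2 ⟨_, HasExpansion.add ha hb⟩

theorem const_mul (hf : IsCSOn c α f) (d : ℝ) : IsCSOn c α fun x => d * f x := by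
  obtain ⟨a, ha⟩ := hf.2
  exact isCSOn_iff_exists_hasExpansion.2 ⟨_, HasExpansion.const_mul ha d⟩

theorem mul_inv (hc : 0 < c) (hf : IsCSOn c (α + 1) f) : IsCSOn c α fun x => f x * x⁻¹ := by
  obtain ⟨a, ha⟩ := hf.2
  have h := HasExpansion.mul_rpow hc ha (-1)
  simp only [Real.rpow_neg_one, add_neg_cancel_right] at h
  exact isCSOn_iff_exists_hasExpansion.2 ⟨a, h⟩

protected theorem zero (c α : ℝ) : IsCSOn c α fun _ => 0 :=
  isCSOn_iff_exists_hasExpansion.2 ⟨0, fun N =>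
    (IsSymbolOn.zero c _).congr fun x _ => by simp [expansionRemainder]⟩

protected theorem const (hc : 0 < c) (n : ℕ) (d : ℝ) : IsCSOn c n fun _ => d := by
  have h := (HasExpansion.rpow_sub_natCast hc n n).const_mul d
  simp only [sub_self, Real.rpow_zero, mul_one] at h
  exact isCSOn_iff_exists_hasExpansion.2 ⟨_, h⟩

end IsCSOn

theorem HasExpansion.neg_integral_Ioi_remainder_succ (hc : 0 < c) (hg : HasExpansion c α g a)
    {N : ℕ} (hN : α + 1 < N) {x : ℝ} (hx : c ≤ x) :
    -∫ t in Ioi x, expansionRemainder α a g (N + 1) t =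
      (-∫ t in Ioi x, expansionRemainder α a g N t) - a N / (α + 1 - N) * x ^ (α + 1 - N) := by
  have hx0 : 0 < x := hc.trans_le hx
  have hexp : α - N < -1 := by linarith
  simp only [expansionRemainder_succ]
  rw [integral_sub ((hg N).integrableOn_Ioi hc hexp hx)
      ((integrableOn_Ioi_rpow_of_lt hexp hx0).const_mul (a N)),
    integral_const_mul, integral_Ioi_rpow_of_lt hexp hx0, sub_add_eq_add_sub]
  ring

theorem hasDerivAt_const_div_mul_rpow {d s x : ℝ} (hx : x ≠ 0) (hd : s + 1 = 0 → d = 0) :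
    HasDerivAt (fun y => d / (s + 1) * y ^ (s + 1)) (d * x ^ s) x := by
  have h := (Real.hasDerivAt_rpow_const (p := s + 1) (Or.inl hx)).const_mul (d / (s + 1))
  rw [add_sub_cancel_right, ← mul_assoc, div_mul_cancel_of_imp hd] at h
  exact h

theorem HasExpansion.exists_primitive (hc : 0 < c) (hg : HasExpansion c α g a)
    (ha : ∀ n : ℕ, α + 1 = n → a n = 0) :
    ∃ G, IsCSOn c (α + 1) G ∧ ∀ x ≥ c, HasDerivWithinAt G (g x) (Ici c) x := by
  obtain ⟨M, hM⟩ := exists_nat_gt (α + 1)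
  let b : ℕ → ℝ := fun j => a j / (α + 1 - j)
  let tail : ℕ → ℝ → ℝ := fun N x => -∫ t in Ioi x, expansionRemainder α a g N t
  let G : ℝ → ℝ := fun x => tail M x + ∑ j ∈ Finset.range M, b j * x ^ (α + 1 - j)
  have hlt {N : ℕ} (hN : M ≤ N) : α + 1 < N := hM.trans_le (by exact_mod_cast hN)
  have hremainder {N : ℕ} (hN : M ≤ N) :
      EqOn (expansionRemainder (α + 1) b G N) (tail N) (Ici c) := fun x hx => by
    induction N, hN using Nat.le_induction with
    | base => exact add_sub_cancel_right _ _
    | succ N hN ih =>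
      rw [expansionRemainder_succ, ih]
      exact (hg.neg_integral_Ioi_remainder_succ hc (hlt hN) hx).symm
  refine ⟨G, isCSOn_iff_exists_hasExpansion.2 ⟨b, .of_le hc M fun N hN => ?_⟩, fun x hx => ?_⟩
  · have hexp : α - N < -1 := by linarith [hlt hN]
    rw [add_sub_right_comm]
    exact ((hg N).neg_integral_Ioi hc hexp).congr (hremainder hN)
  · have hexp : α - M < -1 := by linarith
    have htail : HasDerivWithinAt (tail M) (expansionRemainder α a g M x) (Ici c) x :=
      hasDerivWithinAt_neg_integral_Ioi (hg M).continuousOn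
        ((hg M).integrableOn_Ioi hc hexp le_rfl) hx
    have hsum : HasDerivWithinAt (fun y => ∑ j ∈ Finset.range M, b j * y ^ (α + 1 - j))
        (∑ j ∈ Finset.range M, a j * x ^ (α - j)) (Ici c) x := by
      refine .fun_sum fun j _ => HasDerivAt.hasDerivWithinAt ?_
      simp only [b, add_sub_right_comm α 1]
      exact hasDerivAt_const_div_mul_rpow (hc.trans_le hx).ne' fun h => ha j (by linarith)
    exact (htail.add hsum).congr_deriv (sub_add_cancel _ _)

theorem IsCSOn.exists_primitive_sub_inv (hc : 0 < c) (hg : IsCSOn c α g) :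
    ∃ (d : ℝ) (G : ℝ → ℝ), IsCSOn c (α + 1) G ∧
      (∀ x ≥ c, HasDerivWithinAt G (g x - d * x⁻¹) (Ici c) x) ∧
      (d ≠ 0 → ∃ n : ℕ, α + 1 = n) := by
  obtain ⟨a, ha⟩ := isCSOn_iff_exists_hasExpansion.1 hg
  by_cases hres : ∃ n : ℕ, α + 1 = n
  · obtain ⟨n, hn⟩ := hres
    have hinv := (HasExpansion.rpow_sub_natCast hc α n).const_mul (-a n)
    rw [show α - n = -1 by linarith] at hinv
    obtain ⟨G, hG, hG'⟩ := (ha.add hinv).exists_primitive hc fun m hm => by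
      obtain rfl : m = n := Nat.cast_injective (hm.symm.trans hn)
      simp
    refine ⟨a n, G, hG, fun x hx => (hG' x hx).congr_deriv ?_, fun _ => ⟨n, hn⟩⟩
    rw [Real.rpow_neg_one]
    ring
  · obtain ⟨G, hG, hG'⟩ := ha.exists_primitive hc fun n hn => absurd ⟨n, hn⟩ hres
    exact ⟨0, G, hG, by simpa using hG', fun h => absurd rfl h⟩

end Classical

/-- `f` has a primitive on `[c,∞)` in `𝓟^{β;k}`. Unlike the condition that `∫_c^x f` lie in
`𝓟^{β;k} + ℝ`, this is additive in `f` without any integrability assumption. -/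
def HasLogPolyPrimitive (c β : ℝ) (k : ℕ) (f : ℝ → ℝ) : Prop :=
  ∃ F, MemP c β k F ∧ ∀ x ≥ c, HasDerivWithinAt F (f x) (Ici c) x

section LogPolyhomogeneous

variable {c α β : ℝ} {k l m : ℕ} {f g G : ℝ → ℝ}

theorem continuousOn_log_Ici (hc : 0 < c) : ContinuousOn Real.log (Ici c) :=
  Real.continuousOn_log.mono fun _ hx => (hc.trans_le hx).ne'

theorem IsCSOn.memP_mul_log_pow (hG : IsCSOn c α G) (hmk : m ≤ k) :
    MemP c α k fun x => G x * Real.log x ^ m := by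
  refine ⟨fun l x => if l = m then G x else 0, fun l _ => ?_, fun x _ => ?_⟩
  · by_cases hlm : l = m
    · simpa only [hlm, if_true] using hG
    · simpa only [hlm, if_false] using IsCSOn.zero c α
  · simp [Nat.lt_succ_of_le hmk]

namespace MemP

theorem continuousOn (hc : 0 < c) (hf : MemP c α k f) : ContinuousOn f (Ici c) := by
  obtain ⟨u, hu, hfu⟩ := hf
  refine (continuousOn_finsetSum _ fun l hl => ?_).congr hfu
  exact (hu l (Nat.lt_succ_iff.1 (Finset.mem_range.1 hl))).continuousOn.mul
    ((continuousOn_log_Ici hc).pow l)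

protected theorem zero (c α : ℝ) (k : ℕ) : MemP c α k fun _ => 0 :=
  ⟨fun _ _ => 0, fun _ _ => IsCSOn.zero c α, fun x _ => by simp⟩

theorem add (hf : MemP c α k f) (hg : MemP c α k g) : MemP c α k fun x => f x + g x := by
  obtain ⟨u, hu, hfu⟩ := hf
  obtain ⟨v, hv, hgv⟩ := hg
  refine ⟨fun l x => u l x + v l x, fun l hl => (hu l hl).add (hv l hl), fun x hx => ?_⟩
  simp only [hfu x hx, hgv x hx, add_mul, Finset.sum_add_distrib]

theorem const_mul (hf : MemP c α k f) (d : ℝ) : MemP c α k fun x => d * f x := by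
  obtain ⟨u, hu, hfu⟩ := hf
  refine ⟨fun l x => d * u l x, fun l hl => (hu l hl).const_mul d, fun x hx => ?_⟩
  simp only [hfu x hx, mul_assoc, Finset.mul_sum]

end MemP

namespace HasLogPolyPrimitive

theorem congr (hf : HasLogPolyPrimitive c β k f) (h : ∀ x ≥ c, g x = f x) :
    HasLogPolyPrimitive c β k g := by
  obtain ⟨F, hF, hF'⟩ := hf
  exact ⟨F, hF, fun x hx => h x hx ▸ hF' x hx⟩

protected theorem zero (c β : ℝ) (k : ℕ) : HasLogPolyPrimitive c β k fun _ => 0 :=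
  ⟨fun _ => 0, MemP.zero c β k, fun x _ => hasDerivWithinAt_const x _ 0⟩

theorem add (hf : HasLogPolyPrimitive c β k f) (hg : HasLogPolyPrimitive c β k g) :
    HasLogPolyPrimitive c β k fun x => f x + g x := by
  obtain ⟨F, hF, hF'⟩ := hf
  obtain ⟨G, hG, hG'⟩ := hg
  exact ⟨_, hF.add hG, fun x hx => (hF' x hx).add (hG' x hx)⟩

theorem const_mul (hf : HasLogPolyPrimitive c β k f) (d : ℝ) :
    HasLogPolyPrimitive c β k fun x => d * f x := by
  obtain ⟨F, hF, hF'⟩ := hf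
  exact ⟨_, hF.const_mul d, fun x hx => (hF' x hx).const_mul d⟩

theorem sum {ι : Type*} {u : ι → ℝ → ℝ} (t : Finset ι)
    (hu : ∀ i ∈ t, HasLogPolyPrimitive c β k (u i)) :
    HasLogPolyPrimitive c β k fun x => ∑ i ∈ t, u i x := by
  induction t using Finset.cons_induction with
  | empty => simpa only [Finset.sum_empty] using HasLogPolyPrimitive.zero c β k
  | cons i t _ ih =>
    simp only [Finset.sum_cons]
    exact (hu i (Finset.mem_cons_self i t)).add (ih fun j hj => hu j (Finset.mem_cons_of_mem hj))

theorem memPsum_integral (hc : 0 < c) (hfc : ContinuousOn f (Ici c))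
    (hf : HasLogPolyPrimitive c β k f) : MemPsum c β k 0 0 fun x => ∫ t in c..x, f t := by
  obtain ⟨F, hF, hF'⟩ := hf
  have hconst : IsCSOn c 0 fun _ => -F c := by exact_mod_cast IsCSOn.const hc 0 (-F c)
  refine ⟨F, fun _ => -F c, hF, ⟨fun _ _ => -F c, fun _ _ => hconst, fun x _ => by simp⟩,
    fun x hx => ?_⟩
  have hIcc : Icc c x ⊆ Ici c := Icc_subset_Ici_self
  rw [← sub_eq_add_neg]
  refine intervalIntegral.integral_eq_sub_of_hasDeriv_right_of_le hx
    (fun t ht => (hF' t ht.1).continuousWithinAt.mono hIcc) (fun t ht => ?_)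
    ((hfc.mono hIcc).intervalIntegrable_of_Icc hx)
  exact (hF' t ht.1.le).mono fun s hs => ht.1.le.trans (le_of_lt hs)

end HasLogPolyPrimitive

theorem hasDerivAt_log_pow_succ (m : ℕ) {x : ℝ} (hx : x ≠ 0) :
    HasDerivAt (fun y => Real.log y ^ (m + 1)) ((m + 1) * (x⁻¹ * Real.log x ^ m)) x := by
  refine ((Real.hasDerivAt_log hx).fun_pow (m + 1)).congr_deriv ?_
  push_cast
  ring_nf

theorem hasLogPolyPrimitive_const_mul_inv_mul_log_pow {d : ℝ} (hc : 0 < c)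
    (hd : IsCSOn c β fun _ => d) (hmk : m < k) :
    HasLogPolyPrimitive c β k fun x => d * (x⁻¹ * Real.log x ^ m) := by
  refine ⟨fun x => (m + 1 : ℝ)⁻¹ * (d * Real.log x ^ (m + 1)),
    (hd.memP_mul_log_pow hmk).const_mul _, fun x hx => HasDerivAt.hasDerivWithinAt ?_⟩
  refine (((hasDerivAt_log_pow_succ m (hc.trans_le hx).ne').const_mul d).const_mul _).congr_deriv ?_
  field_simp

theorem HasLogPolyPrimitive.mul_log_pow_succ (hc : 0 < c) (hG : IsCSOn c β G)
    (hG' : ∀ x ≥ c, HasDerivWithinAt G (g x) (Ici c) x) (hmk : m + 1 ≤ k)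
    (h : HasLogPolyPrimitive c β k fun x => G x * x⁻¹ * Real.log x ^ m) :
    HasLogPolyPrimitive c β k fun x => g x * Real.log x ^ (m + 1) := by
  have hproduct : HasLogPolyPrimitive c β k fun x =>
      g x * Real.log x ^ (m + 1) + G x * ((m + 1) * (x⁻¹ * Real.log x ^ m)) :=
    ⟨_, hG.memP_mul_log_pow hmk, fun x hx =>
      (hG' x hx).mul (hasDerivAt_log_pow_succ m (hc.trans_le hx).ne').hasDerivWithinAt⟩
  refine (hproduct.add (h.const_mul (-(m + 1)))).congr fun x _ => ?_
  ring

theorem IsCSOn.hasLogPolyPrimitive_mul_log_pow (hc : 0 < c) (hg : IsCSOn c α g) (hmk : m ≤ k)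
    (hres : ∀ n : ℕ, α + 1 = n → m < k) :
    HasLogPolyPrimitive c (α + 1) k fun x => g x * Real.log x ^ m := by
  induction m using Nat.strong_induction_on generalizing g with
  | _ m ih =>
    obtain ⟨d, G, hG, hG', hd⟩ := hg.exists_primitive_sub_inv hc
    have hregular : HasLogPolyPrimitive c (α + 1) k fun x =>
        (g x - d * x⁻¹) * Real.log x ^ m := by
      cases m with
      | zero => exact ⟨_, hG.memP_mul_log_pow hmk, by simpa only [pow_zero, mul_one] using hG'⟩
      | succ m =>
        exact .mul_log_pow_succ hc hG hG' hmk <| ih m m.lt_succ_self (hG.mul_inv hc)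
          (m.le_succ.trans hmk) fun n hn => m.lt_succ_self.trans (hres n hn)
    have hresonant : HasLogPolyPrimitive c (α + 1) k fun x => d * (x⁻¹ * Real.log x ^ m) := by
      by_cases hd0 : d = 0
      · simpa only [hd0, zero_mul] using HasLogPolyPrimitive.zero c (α + 1) k
      · obtain ⟨n, hn⟩ := hd hd0
        exact hasLogPolyPrimitive_const_mul_inv_mul_log_pow hc (hn ▸ .const hc n d) (hres n hn)
    exact (hregular.add hresonant).congr fun x _ => by ring

theorem MemP.hasLogPolyPrimitive (hc : 0 < c) (hf : MemP c α l f) (hlk : l ≤ k)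
    (hres : ∀ n : ℕ, α + 1 = n → l < k) : HasLogPolyPrimitive c (α + 1) k f := by
  obtain ⟨u, hu, hfu⟩ := hf
  refine HasLogPolyPrimitive.congr (.sum _ fun m hm => ?_) hfu
  have hml : m ≤ l := Nat.lt_succ_iff.1 (Finset.mem_range.1 hm)
  exact (hu m hml).hasLogPolyPrimitive_mul_log_pow hc (hml.trans hlk) fun n hn =>
    hml.trans_lt (hres n hn)

end LogPolyhomogeneous

theorem statement17_general {c α : ℝ} {k l : ℕ} {f : ℝ → ℝ} (hc : 0 < c) (hlk : l ≤ k)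
    (hres : ∀ n : ℤ, -1 ≤ n → α = n → l < k) (hf : MemP c α l f) :
    MemPsum c (α + 1) k 0 0 fun x => ∫ t in c..x, f t :=
  (hf.hasLogPolyPrimitive hc hlk fun n hn =>
    hres (n - 1) (by omega) (by push_cast; linarith)).memPsum_integral hc (hf.continuousOn hc)

/-- **Statement 17** (Lemma `lem:int_log`).
The integration operator maps `𝓟^{α;l}` into `𝓟^{α+1;l} + 𝓟^{0;0}` for every
`α ∈ ℝ∖ℤ_{≥-1}` and `l ∈ ℕ`, and maps `𝓟^{-1;l}` into `𝓟^{0;l+1} + 𝓟^{0;0}` for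
every `l ∈ ℕ`. -/
theorem statement17 :
    (∀ α : ℝ, (∀ n : ℤ, -1 ≤ n → α ≠ (n : ℝ)) → ∀ l : ℕ, ∀ f : ℝ → ℝ,
      MemP 1 α l f → MemPsum 1 (α + 1) l 0 0 (intOp f)) ∧
    (∀ l : ℕ, ∀ f : ℝ → ℝ,
      MemP 1 (-1) l f → MemPsum 1 0 (l + 1) 0 0 (intOp f)) :=
  ⟨fun _ hα _ _ hf => statement17_general one_pos le_rfl (fun n hn h => absurd h (hα n hn)) hf,
    fun l _ hf => by
      simpa using! statement17_general one_pos l.le_succ (fun _ _ _ => l.lt_succ_self) hf⟩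
end
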